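/- Let H be an induced subgraph of a graph G with mr(F₂,H) = k and mr(F₂,G) > k. Let R be a set of edges in G−H (unordered pairs of distinct vertices of G−H), T a set of vertices of G−H, and suppose I_R ∪ I_T = MR(F₂,H). Let S be the set of all vertices incident to an edge of R. If G ∈ F_{k+1}(F₂,H), then |V(G)| − |V(H)| ≤ |S| + |T| ≤ 2|R| + |T|. -/

import Mathlib

/-!
Every vertex outside `W` lies in `S ∪ T`, where `S` is the set of vertices incident to an edge
of `R`. Indeed, if `x ∉ W` were in neither set, a minimum-rank matrix `A` of `G - x` would have
rank at most `k`. Its principal submatrix `M` on `W` is a matrix of `H` of rank at most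
`k = mr(H)`, so `M ∈ MR(H)` and `rank A = rank M = k`. For `v ∈ T` the matrix `[M | wt(v)]`, and
for `uv ∈ R` the bordered matrix, is a submatrix of `A` because the vertices involved differ from
`x`; hence neither has rank larger than `M`, contradicting the covering hypothesis. Over `F₂` the
off-diagonal entries of `A` are determined by the graph, which is what makes these submatrices
agree with the weights.
-/

open Matrix

/-- `A` is a symmetric matrix over `F` whose off-diagonal nonzero pattern is
given by the graph `G` (diagonal entries are unconstrained). -/
def IsGraphMatrix (F : Type*) [Field F] {V : Type*} (G : SimpleGraph V)
    (A : Matrix V V F) : Prop :=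
  A.IsSymm ∧ ∀ i j : V, i ≠ j → (A i j ≠ 0 ↔ G.Adj i j)

/-- The minimum rank `mr(F, G)` of the graph `G` over the field `F`. -/
noncomputable def minRank (F : Type*) [Field F] {V : Type*} [Fintype V]
    (G : SimpleGraph V) : ℕ :=
  sInf {r : ℕ | ∃ A : Matrix V V F, IsGraphMatrix F G A ∧ A.rank = r}

/-- The graph `G - v` obtained from `G` by deleting the vertex `v`. -/
def deleteVert {V : Type*} (G : SimpleGraph V) (v : V) : SimpleGraph {u : V // u ≠ v} :=
  SimpleGraph.comap Subtype.val G

/-- The induced subgraph of `G` on a finite set `W` of vertices. -/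
def inducedSub {V : Type*} (G : SimpleGraph V) (W : Finset V) :
    SimpleGraph {x : V // x ∈ W} :=
  SimpleGraph.comap Subtype.val G

/-- `MR(F, G)`: the set of matrices in `S(F, G)` attaining the minimum rank of `G`. -/
noncomputable def MRSet (F : Type*) [Field F] {V : Type*} [Fintype V] (G : SimpleGraph V) :
    Set (Matrix V V F) :=
  {A | IsGraphMatrix F G A ∧ A.rank = minRank F G}

/-- The weight vector of a vertex `v` with respect to the induced subgraph on `W`:
its entry at `i ∈ W` is `1` iff `v` is adjacent to `i` in `G`. -/
def wtVec {V : Type*} (G : SimpleGraph V) [DecidableRel G.Adj] (W : Finset V) (v : V) :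
    {x : V // x ∈ W} → ZMod 2 :=
  fun i => if G.Adj v ↑i then 1 else 0

/-- The matrix `[M | w]`: `M` augmented by the extra column `w`. -/
def augmentCol {F : Type*} {n : Type*} (M : Matrix n n F) (w : n → F) :
    Matrix n (n ⊕ Unit) F :=
  Matrix.of fun i => Sum.elim (fun j => M i j) (fun _ => w i)

/-- The bordered matrix `[[M, u], [vᵀ, c]]`. -/
def borderMat {F : Type*} {n : Type*} (M : Matrix n n F) (u v : n → F) (c : F) :
    Matrix (n ⊕ Unit) (n ⊕ Unit) F :=
  Matrix.of (Sum.elim (fun i => Sum.elim (fun j => M i j) (fun _ => u i))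
                      (fun _ => Sum.elim (fun j => v j) (fun _ => c)))

theorem exists_isGraphMatrix_rank_eq (F : Type*) [Field F] {V : Type*} [Fintype V]
    (G : SimpleGraph V) : ∃ A : Matrix V V F, IsGraphMatrix F G A ∧ A.rank = minRank F G := by
  classical
  have hne : {r : ℕ | ∃ A : Matrix V V F, IsGraphMatrix F G A ∧ A.rank = r}.Nonempty :=
    ⟨_, G.adjMatrix F, ⟨G.isSymm_adjMatrix, fun i j _ => by simp [SimpleGraph.adjMatrix_apply]⟩,
      rfl⟩
  exact Nat.sInf_mem hne

theorem minRank_le_rank {F : Type*} [Field F] {V : Type*} [Fintype V]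
    {G : SimpleGraph V} {A : Matrix V V F} (hA : IsGraphMatrix F G A) : minRank F G ≤ A.rank :=
  Nat.sInf_le ⟨A, hA, rfl⟩

/-- Over `F₂`, the off-diagonal entries of a graph matrix are those of the adjacency matrix. -/
theorem IsGraphMatrix.apply_eq {V : Type*} {G : SimpleGraph V} [DecidableRel G.Adj]
    {A : Matrix V V (ZMod 2)} (hA : IsGraphMatrix (ZMod 2) G A) {i j : V} (hij : i ≠ j) :
    A i j = if G.Adj i j then 1 else 0 := by
  have h := hA.2 i j hij
  have h2 : ∀ a : ZMod 2, a ≠ 0 → a = 1 := by decide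
  split_ifs with hadj
  · exact h2 _ (h.2 hadj)
  · by_contra hne
    exact hadj (h.1 hne)

theorem IsGraphMatrix.submatrix {F : Type*} [Field F] {V U : Type*} {G : SimpleGraph V}
    {A : Matrix V V F} (hA : IsGraphMatrix F G A) {f : U → V} (hf : Function.Injective f) :
    IsGraphMatrix F (G.comap f) (A.submatrix f f) :=
  ⟨hA.1.submatrix f, fun i j hij => hA.2 (f i) (f j) (hf.ne hij)⟩

/-- A set `E` of unordered pairs covers at most `2|E|` points. -/
theorem ncard_incident_le {V : Type*} [Fintype V] (E : Set (Sym2 V)) :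
    {x : V | ∃ e ∈ E, x ∈ e}.ncard ≤ 2 * E.ncard := by
  classical
  have hS : {x : V | ∃ e ∈ E, x ∈ e} = (E.toFinset.biUnion Sym2.toFinset : Finset V) := by
    ext x
    simp [Sym2.mem_toFinset]
  rw [hS, Set.ncard_coe_finset, Set.ncard_eq_toFinset_card', mul_comm]
  refine Finset.card_biUnion_le_card_mul _ _ _ fun e _ => ?_
  rw [Sym2.card_toFinset]
  split_ifs <;> omega

/-- Let `H = G[W]` be an induced subgraph of `G` with `mr(F₂, H) = k` and
`mr(F₂, G) > k`.  Let `R` be a set of edges of `G - H` (unordered pairs of distinct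
vertices outside `W`) and `T` a set of vertices of `G - H` such that
`I_R ∪ I_T = MR(F₂, H)` (every `M ∈ MR(F₂, H)` has a rank-increasing edge in `R` or a
rank-increasing vertex in `T`).  Let `S` be the set of vertices incident to an edge of
`R`.  If `G ∈ F_{k+1}(F₂, H)` (witnessed by this copy of `H`), then
`|V(G)| - |V(H)| ≤ |S| + |T| ≤ 2|R| + |T|`. -/
theorem card_bound_of_cover {V : Type*} [Fintype V] [DecidableEq V]
    (G : SimpleGraph V) [DecidableRel G.Adj] (W : Finset V) (k : ℕ)
    (hH : minRank (ZMod 2) (inducedSub G W) = k)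
    (hGgt : k < minRank (ZMod 2) G)
    (R : Set (Sym2 V)) (T : Set V)
    (hR : ∀ e ∈ R, ¬ e.IsDiag ∧ ∀ x ∈ e, x ∉ W)
    (hT : ∀ v ∈ T, v ∉ W)
    (hcover : ∀ M ∈ MRSet (ZMod 2) (inducedSub G W),
      (∃ e ∈ R, ∃ u v : V, e = s(u, v) ∧
        M.rank < (borderMat M (wtVec G W u) (wtVec G W v)
          (if G.Adj u v then 1 else 0)).rank) ∨
      (∃ v ∈ T, M.rank < (augmentCol M (wtVec G W v)).rank))
    (hG : k + 1 ≤ minRank (ZMod 2) G)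
    (hdel : ∀ v : V, v ∉ W → minRank (ZMod 2) (deleteVert G v) ≤ k) :
    Wᶜ.card ≤ {x : V | ∃ e ∈ R, x ∈ e}.ncard + T.ncard ∧
      {x : V | ∃ e ∈ R, x ∈ e}.ncard + T.ncard ≤ 2 * R.ncard + T.ncard := by
  classical
  refine ⟨?_, Nat.add_le_add_right (ncard_incident_le R) _⟩
  suffices hsub : ((Wᶜ : Finset V) : Set V) ⊆ {x : V | ∃ e ∈ R, x ∈ e} ∪ T by
    rw [← Set.ncard_coe_finset]
    exact (Set.ncard_le_ncard hsub (Set.toFinite _)).trans (Set.ncard_union_le _ _)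
  intro x hx
  have hxW : x ∉ W := by simpa using hx
  by_contra hxST
  have hxS : ∀ e ∈ R, x ∉ e := fun e he hxe => hxST (Or.inl ⟨e, he, hxe⟩)
  have hxT : x ∉ T := fun h => hxST (Or.inr h)
  obtain ⟨A, hA, hArank⟩ := exists_isGraphMatrix_rank_eq (ZMod 2) (deleteVert G x)
  have hAk : A.rank ≤ k := hArank ▸ hdel x hxW
  let f : {y : V // y ∈ W} → {u : V // u ≠ x} := fun y => ⟨y.1, fun h => hxW (h ▸ y.2)⟩
  have hf : Function.Injective f := fun a b h => Subtype.ext (congrArg (fun z => z.1) h)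
  have hM : IsGraphMatrix (ZMod 2) (inducedSub G W) (A.submatrix f f) := hA.submatrix hf
  have hkM : k ≤ (A.submatrix f f).rank := hH ▸ minRank_le_rank hM
  have hMA : (A.submatrix f f).rank ≤ A.rank := A.rank_submatrix_le f f
  have hentry : ∀ a b : {u : V // u ≠ x}, a.1 ≠ b.1 →
      A a b = if G.Adj a.1 b.1 then 1 else 0 := by
    letI : DecidableRel (deleteVert G x).Adj := fun a b => inferInstanceAs (Decidable (G.Adj a b))
    exact fun a b hab => hA.apply_eq (fun h => hab (congrArg Subtype.val h))
  rcases hcover _ ⟨hM, by omega⟩ with ⟨e, he, u, v, rfl, hlt⟩ | ⟨v, hv, hlt⟩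
  · obtain ⟨hdiag, hout⟩ := hR _ he
    have huv : u ≠ v := by simpa using hdiag
    have huW : u ∉ W := hout u (by simp)
    have hvW : v ∉ W := hout v (by simp)
    have hux : u ≠ x := fun h => hxS _ he (by simp [h])
    have hvx : v ≠ x := fun h => hxS _ he (by simp [h])
    -- The last row of the bordered matrix comes from `v`, the last column from `u`.
    have hB : borderMat (A.submatrix f f) (wtVec G W u) (wtVec G W v)
        (if G.Adj u v then 1 else 0) =
        A.submatrix (Sum.elim f fun _ => ⟨v, hvx⟩) (Sum.elim f fun _ => ⟨u, hux⟩) := by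
      ext (i | i) (j | j)
      · rfl
      · have hne : i.1 ≠ u := fun h => huW (h ▸ i.2)
        simpa [borderMat, wtVec, f, G.adj_comm] using (hentry (f i) ⟨u, hux⟩ hne).symm
      · have hne : v ≠ j.1 := fun h => hvW (h ▸ j.2)
        exact (hentry ⟨v, hvx⟩ (f j) hne).symm
      · simpa [borderMat, G.adj_comm] using (hentry ⟨v, hvx⟩ ⟨u, hux⟩ huv.symm).symm
    rw [hB] at hlt
    have := A.rank_submatrix_le (Sum.elim f fun _ : Unit => ⟨v, hvx⟩)
      (Sum.elim f fun _ : Unit => ⟨u, hux⟩)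
    omega
  · have hvW : v ∉ W := hT v hv
    have hvx : v ≠ x := fun h => hxT (h ▸ hv)
    have hB : augmentCol (A.submatrix f f) (wtVec G W v) =
        A.submatrix f (Sum.elim f fun _ => ⟨v, hvx⟩) := by
      ext i (j | j)
      · rfl
      · have hne : i.1 ≠ v := fun h => hvW (h ▸ i.2)
        simpa [augmentCol, wtVec, f, G.adj_comm] using (hentry (f i) ⟨v, hvx⟩ hne).symm
    rw [hB] at hlt
    have := A.rank_submatrix_le f (Sum.elim f fun _ : Unit => ⟨v, hvx⟩)
    omega
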